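/- arXiv:1409.8266 — 4 statements merged into one kernel-verified Lean document; each statement's English description precedes it below -/
import Mathlib

section
/- Let {φ_i}_{i=1}^M be vectors in a finite-dimensional real Hilbert space H. The following are equivalent: (1) {φ_i}_{i=1}^M yields phase retrieval; (2) {T φ_i}_{i=1}^M yields phase retrieval for every invertible linear operator T on H; (3) {T φ_i}_{i=1}^M yields norm retrieval for every invertible linear operator T on H. -/
/-!
Since `⟪x, T φ⟫ = ⟪T* x, φ⟫` and `T*` is injective, phase retrieval is preserved by every
invertible operator; and `x = ± y` forces `‖x‖ = ‖y‖`.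

For the converse, let `x`, `y` have the same measurements against `φ`. For a symmetric invertible
`S`, the vectors `S x`, `S y` have the same measurements against `S⁻¹ φ`, so `‖S x‖ = ‖S y‖`.
Taking `S = 1` gives `‖x‖ = ‖y‖`; taking `S z = z + ⟪x, z⟫ x` then gives `⟪x, y⟫² = ‖x‖⁴`, the
equality case of Cauchy-Schwarz, whence `x = ± y`.
-/

open RealInnerProductSpace

/-- The positive definite operator `z ↦ z + ⟪x, z⟫ x`. -/
noncomputable def rankOnePerturbation {H : Type*} [NormedAddCommGroup H] [InnerProductSpace ℝ H]
    (x : H) : H →ₗ[ℝ] H :=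
  LinearMap.id + (innerₗ H x).smulRight x

lemma rankOnePerturbation_apply {H : Type*} [NormedAddCommGroup H] [InnerProductSpace ℝ H]
    (x z : H) : rankOnePerturbation x z = z + ⟪x, z⟫ • x := by
  simp [rankOnePerturbation]

lemma rankOnePerturbation_injective {H : Type*} [NormedAddCommGroup H] [InnerProductSpace ℝ H]
    (x : H) : Function.Injective (rankOnePerturbation x) := by
  rw [injective_iff_map_eq_zero]
  intro z hz
  have h : ⟪z, rankOnePerturbation x z⟫ = 0 := by rw [hz, inner_zero_right]
  rw [rankOnePerturbation_apply, inner_add_right, inner_smul_right, real_inner_comm x z] at h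
  have : ⟪z, z⟫ = 0 := by
    nlinarith [real_inner_self_nonneg (x := z), mul_self_nonneg ⟪x, z⟫]
  exact inner_self_eq_zero.mp this

lemma rankOnePerturbation_symmetric {H : Type*} [NormedAddCommGroup H] [InnerProductSpace ℝ H]
    (x u v : H) : ⟪rankOnePerturbation x u, v⟫ = ⟪u, rankOnePerturbation x v⟫ := by
  simp only [rankOnePerturbation_apply, inner_add_left, inner_add_right, real_inner_smul_left,
    real_inner_smul_right, real_inner_comm x u]
  ring

/-- Norm retrieval by all invertible images of `φ` implies phase retrieval by `φ`. -/
lemma phase_of_norm {H : Type*} [NormedAddCommGroup H] [InnerProductSpace ℝ H]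
    [FiniteDimensional ℝ H] {M : ℕ} (φ : Fin M → H)
    (h : ∀ T : H ≃ₗ[ℝ] H, ∀ x y : H,
      (∀ i, |⟪x, T (φ i)⟫| = |⟪y, T (φ i)⟫|) → ‖x‖ = ‖y‖)
    (x y : H) (hxy : ∀ i, |⟪x, φ i⟫| = |⟪y, φ i⟫|) : x = y ∨ x = -y := by
  have h1 : ‖x‖ = ‖y‖ := h (LinearEquiv.refl ℝ H) x y (by simpa using hxy)
  let S := LinearEquiv.ofInjectiveEndo _ (rankOnePerturbation_injective x)
  have hS : ∀ i, rankOnePerturbation x (S.symm (φ i)) = φ i := fun i => S.apply_symm_apply (φ i)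
  have h2 : ‖rankOnePerturbation x x‖ = ‖rankOnePerturbation x y‖ := by
    refine h S.symm _ _ fun i => ?_
    rw [rankOnePerturbation_symmetric, rankOnePerturbation_symmetric, hS]
    exact hxy i
  have e1 : ⟪x, x⟫ = ⟪y, y⟫ := by
    rw [real_inner_self_eq_norm_sq, real_inner_self_eq_norm_sq, h1]
  have e2 : ⟪rankOnePerturbation x x, rankOnePerturbation x x⟫
      = ⟪rankOnePerturbation x y, rankOnePerturbation x y⟫ := by
    rw [real_inner_self_eq_norm_sq, real_inner_self_eq_norm_sq, h2]
  simp only [rankOnePerturbation_apply, inner_add_left, inner_add_right, real_inner_smul_left,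
    real_inner_smul_right, real_inner_comm x y] at e2
  have e3 : (⟪x, x⟫ - ⟪x, y⟫) * (⟪x, x⟫ + ⟪x, y⟫) * (2 + ⟪x, x⟫) = 0 := by
    linear_combination e2 - e1
  have hpos : (2 + ⟪x, x⟫ : ℝ) ≠ 0 := by
    have := real_inner_self_nonneg (x := x)
    positivity
  rcases mul_eq_zero.mp ((mul_eq_zero.mp e3).resolve_right hpos) with e | e
  · left
    rw [← sub_eq_zero, ← inner_self_eq_zero (𝕜 := ℝ), real_inner_sub_sub_self]
    linear_combination 2 * e - e1
  · right
    rw [eq_neg_iff_add_eq_zero, ← inner_self_eq_zero (𝕜 := ℝ), real_inner_add_add_self]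
    linear_combination 2 * e - e1

/-- Phase retrieval passes to every invertible image, because the adjoint is injective. -/
lemma phase_map {H : Type*} [NormedAddCommGroup H] [InnerProductSpace ℝ H]
    [FiniteDimensional ℝ H] {M : ℕ} (φ : Fin M → H)
    (h : ∀ x y : H, (∀ i, |⟪x, φ i⟫| = |⟪y, φ i⟫|) → x = y ∨ x = -y)
    (T : H ≃ₗ[ℝ] H) (x y : H) (hxy : ∀ i, |⟪x, T (φ i)⟫| = |⟪y, T (φ i)⟫|) :
    x = y ∨ x = -y := by
  have adj : ∀ u v : H, ⟪LinearMap.adjoint (T : H →ₗ[ℝ] H) u, v⟫ = ⟪u, T v⟫ := fun u v =>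
    LinearMap.adjoint_inner_left (T : H →ₗ[ℝ] H) v u
  have inj : Function.Injective (LinearMap.adjoint (T : H →ₗ[ℝ] H)) := by
    intro u v huv
    refine ext_inner_right ℝ fun w => ?_
    rw [← T.apply_symm_apply w, ← adj, ← adj, huv]
  rcases h (LinearMap.adjoint (T : H →ₗ[ℝ] H) x) (LinearMap.adjoint (T : H →ₗ[ℝ] H) y)
      (fun i => by rw [adj, adj, hxy i]) with e | e
  · exact Or.inl (inj e)
  · exact Or.inr (inj (by rw [e, map_neg]))

/-- `{φ_i}` yields phase retrieval iff `{T φ_i}` yields phase retrieval for all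
invertible operators `T` iff `{T φ_i}` yields norm retrieval for all invertible operators `T`. -/
theorem phase_retrieval_iff_all_invertible
    {H : Type*} [NormedAddCommGroup H] [InnerProductSpace ℝ H] [FiniteDimensional ℝ H]
    {M : ℕ} (φ : Fin M → H) :
    ((∀ x y : H, (∀ i, |⟪x, φ i⟫| = |⟪y, φ i⟫|) → x = y ∨ x = -y) ↔
      (∀ T : H ≃ₗ[ℝ] H, ∀ x y : H,
        (∀ i, |⟪x, T (φ i)⟫| = |⟪y, T (φ i)⟫|) → x = y ∨ x = -y)) ∧
    ((∀ x y : H, (∀ i, |⟪x, φ i⟫| = |⟪y, φ i⟫|) → x = y ∨ x = -y) ↔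
      (∀ T : H ≃ₗ[ℝ] H, ∀ x y : H,
        (∀ i, |⟪x, T (φ i)⟫| = |⟪y, T (φ i)⟫|) → ‖x‖ = ‖y‖)) := by
  refine ⟨⟨phase_map φ, fun h => ?_⟩, fun h T x y hxy => ?_, phase_of_norm φ⟩
  · simpa using h (LinearEquiv.refl ℝ H)
  · rcases phase_map φ h T x y hxy with rfl | rfl
    · rfl
    · exact norm_neg y
end

section
/- Let {φ_i}_{i=1}^M be a family of vectors spanning a finite-dimensional real Hilbert space H. Then there exists an invertible linear operator T on H such that {T φ_i}_{i=1}^M yields norm retrieval. -/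
/-!
A spanning family contains a basis `φ ∘ a` of `H`. Let `T` be the linear automorphism carrying this
basis to an orthonormal basis. Then `‖x‖ ^ 2 = ∑ k, |⟪x, T (φ (a k))⟫| ^ 2` by Parseval's identity
(`OrthonormalBasis.sum_sq_norm_inner_left`), so the norm is determined by those measurements alone.
-/

open RealInnerProductSpace

/-- If `{φ_i}` spans `H`, there is an invertible operator `T` on `H` so that
`{T φ_i}` yields norm retrieval. -/
theorem exists_invertible_norm_retrieval
    {H : Type*} [NormedAddCommGroup H] [InnerProductSpace ℝ H] [FiniteDimensional ℝ H]
    {M : ℕ} (φ : Fin M → H) (hspan : Submodule.span ℝ (Set.range φ) = ⊤) :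
    ∃ T : H ≃ₗ[ℝ] H, ∀ x y : H,
      (∀ i, |⟪x, T (φ i)⟫| = |⟪y, T (φ i)⟫|) → ‖x‖ = ‖y‖ := by
  obtain ⟨κ, a, ha, hs, hli⟩ := exists_linearIndependent' ℝ φ
  let b : Module.Basis κ ℝ H := Module.Basis.mk hli (by rw [hs, hspan])
  have : Fintype κ := Fintype.ofInjective a ha
  let e := stdOrthonormalBasis ℝ H
  let σ : κ ≃ Fin (Module.finrank ℝ H) := b.indexEquiv e.toBasis
  refine ⟨b.equiv e.toBasis σ, fun x y h => ?_⟩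
  have hT : ∀ k, b.equiv e.toBasis σ (φ (a k)) = e (σ k) := fun k => by
    have hb : b k = φ (a k) := by simp [b]
    rw [← hb, Module.Basis.equiv_apply, OrthonormalBasis.coe_toBasis]
  have hsq : ‖x‖ ^ 2 = ‖y‖ ^ 2 := by
    rw [← e.sum_sq_norm_inner_left x, ← e.sum_sq_norm_inner_left y]
    refine Finset.sum_congr rfl fun j _ => ?_
    have hj := h (a (σ.symm j))
    rw [hT, Equiv.apply_symm_apply] at hj
    rw [Real.norm_eq_abs, Real.norm_eq_abs, hj]
  exact (sq_eq_sq₀ (norm_nonneg x) (norm_nonneg y)).1 hsq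
end

section
/- Let {φ_i}_{i=1}^N be unit norm vectors in an N-dimensional real Hilbert space H. Then {φ_i}_{i=1}^N yields norm retrieval if and only if the vectors φ_1,…,φ_N are pairwise orthogonal. -/
open RealInnerProductSpace

/-!
If the vectors are orthogonal, they form an orthonormal basis and Parseval's identity expresses
`‖x‖` through the numbers `|⟪x, φ i⟫|`.

Conversely, norm retrieval makes the analysis map `x ↦ (⟪x, φ i⟫)ᵢ` injective (compare a kernel
vector with `0`), hence bijective by dimension, so there is a dual family `ψ` with
`⟪ψ i, φ j⟫ = δᵢⱼ`. For `i ≠ j` the vectors `ψ i + ψ j` and `ψ i - ψ j` have measurements of equal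
modulus, so their norms agree and `⟪ψ i, ψ j⟫ = 0`. Expanding `φ i = ∑ₖ ⟪φ i, φ k⟫ ψ k` and pairing
with `ψ j` gives `0 = ⟪φ i, φ j⟫ ‖ψ j‖²`, where `ψ j ≠ 0`.
-/

/-- `N` unit norm vectors in an `N`-dimensional real Hilbert space yield norm
retrieval iff they are pairwise orthogonal. -/
theorem unit_norm_retrieval_iff_orthogonal
    {H : Type*} [NormedAddCommGroup H] [InnerProductSpace ℝ H] [FiniteDimensional ℝ H]
    {N : ℕ} (hH : Module.finrank ℝ H = N)
    (φ : Fin N → H) (hunit : ∀ i, ‖φ i‖ = 1) :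
    (∀ x y : H, (∀ i, |⟪x, φ i⟫| = |⟪y, φ i⟫|) → ‖x‖ = ‖y‖) ↔
    (∀ i j, i ≠ j → ⟪φ i, φ j⟫ = 0) := by
  constructor
  · intro h
    let T : H →ₗ[ℝ] (Fin N → ℝ) := LinearMap.pi fun i => (innerSL ℝ (φ i)).toLinearMap
    have hT : ∀ x i, T x i = ⟪x, φ i⟫ := fun x i => by simp [T, real_inner_comm]
    have hinj : Function.Injective T := by
      rw [injective_iff_map_eq_zero]
      intro x hx
      have := h x 0 fun i => by rw [← hT, hx]; simp
      simpa using this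
    have hsurj : Function.Surjective T :=
      (LinearMap.injective_iff_surjective_of_finrank_eq_finrank (by simp [hH])).1 hinj
    choose ψ hψ using fun i : Fin N => hsurj (Pi.single i 1)
    have hdual : ∀ i j, ⟪ψ i, φ j⟫ = if j = i then 1 else 0 := fun i j => by
      rw [← hT, hψ, Pi.single_apply]
    have horth : ∀ i j, i ≠ j → ⟪ψ i, ψ j⟫ = 0 := by
      intro i j hij
      have h1 := h (ψ i + ψ j) (ψ i - ψ j) fun k => by
        rw [inner_add_left, inner_sub_left, hdual, hdual]
        by_cases hi : k = i
        · have hj : k ≠ j := hi ▸ hij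
          simp [hj]
        · simp [hi]
      have h2 := norm_add_sq_real (ψ i) (ψ j)
      have h3 := norm_sub_sq_real (ψ i) (ψ j)
      rw [h1] at h2
      linarith
    intro i j hij
    have hexp : φ i = ∑ k, ⟪φ i, φ k⟫ • ψ k := by
      apply hinj
      ext l
      rw [hT, hT, sum_inner]
      simp [real_inner_smul_left, hdual]
    have h1 : ⟪φ i, ψ j⟫ = ⟪φ i, φ j⟫ * ⟪ψ j, ψ j⟫ := by
      conv_lhs => rw [hexp]
      rw [sum_inner, Finset.sum_eq_single j]
      · rw [real_inner_smul_left]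
      · intro k _ hk
        rw [real_inner_smul_left, horth k j hk, mul_zero]
      · simp
    rw [real_inner_comm, hdual, if_neg hij] at h1
    refine (mul_eq_zero.1 h1.symm).resolve_right fun h0 => ?_
    have := hdual j j
    rw [inner_self_eq_zero.1 h0] at this
    simp at this
  · intro h x y hxy
    have ho : Orthonormal ℝ φ := ⟨hunit, fun i j hij => h i j hij⟩
    have hspan := ho.linearIndependent.span_eq_top_of_card_eq_finrank' (by simp [hH])
    let b := OrthonormalBasis.mk ho hspan.ge
    have hb : ∀ z : H, ‖z‖ ^ 2 = ∑ i, |⟪z, φ i⟫| ^ 2 := fun z => by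
      rw [← b.sum_sq_norm_inner_left z]
      simp [b]
    have h2 : ‖x‖ ^ 2 = ‖y‖ ^ 2 := by
      rw [hb, hb]
      exact Finset.sum_congr rfl fun i _ => by rw [hxy]
    exact (sq_eq_sq₀ (norm_nonneg _) (norm_nonneg _)).1 h2
end

section
/- Let {e_1, e_2, e_3} be an orthonormal basis of ℝ³ and let φ_1, φ_2 ∈ ℝ³ be such that the five vectors {e_1, e_2, e_3, φ_1, φ_2} are full spark (every three of them are linearly independent). If x, y ∈ ℝ³ satisfy ‖x‖ = ‖y‖ = 1, |⟨x, e_i⟩| = |⟨y, e_i⟩| for i = 1, 2, and |⟨x, φ_j⟩| = |⟨y, φ_j⟩| for j = 1, 2, then x = y or x = −y. -/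
/-!
The unit norm supplies the missing measurement: Parseval's identity gives
`⟪x, e₃⟫ ^ 2 = 1 - ⟪x, e₁⟫ ^ 2 - ⟪x, e₂⟫ ^ 2`, so `|⟪x, e₃⟫| = |⟪y, e₃⟫|` as well. Each of the five
vectors is then orthogonal to `x - y` or to `x + y`, so one of these two is orthogonal to at least
three of the vectors. Those three are linearly independent, hence span `ℝ³`, and the vector
orthogonal to them vanishes.
-/

open RealInnerProductSpace

/-- If every three of the vectors are linearly independent, only the zero vector is orthogonal to
three or more of them. -/
lemma eq_zero_of_three_le_card_orthogonal (v : Fin 5 → EuclideanSpace ℝ (Fin 3))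
    (hfs : ∀ S : Finset (Fin 5), S.card = 3 → LinearIndependent ℝ (fun i : S => v i))
    (w : EuclideanSpace ℝ (Fin 3)) (T : Finset (Fin 5)) (hT : 3 ≤ T.card)
    (hw : ∀ i ∈ T, ⟪w, v i⟫ = 0) : w = 0 := by
  obtain ⟨S, hST, hS⟩ := Finset.exists_subset_card_eq hT
  have hspan := (hfs S hS).span_eq_top_of_card_eq_finrank' (by simp [hS])
  have hle : Submodule.span ℝ (Set.range fun i : S => v i) ≤ LinearMap.ker (innerₛₗ ℝ w) := by
    rw [Submodule.span_le]
    rintro _ ⟨i, rfl⟩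
    simpa using hw i (hST i.2)
  have hmem : w ∈ LinearMap.ker (innerₛₗ ℝ w) := hle (hspan ▸ Submodule.mem_top)
  simpa using hmem

/-- Phase retrieval for five full spark vectors in `ℝ³`. -/
lemma eq_or_eq_neg_of_abs_inner_eq (v : Fin 5 → EuclideanSpace ℝ (Fin 3))
    (hfs : ∀ S : Finset (Fin 5), S.card = 3 → LinearIndependent ℝ (fun i : S => v i))
    (x y : EuclideanSpace ℝ (Fin 3)) (h : ∀ i, |⟪x, v i⟫| = |⟪y, v i⟫|) :
    x = y ∨ x = -y := by
  classical
  set A : Finset (Fin 5) := Finset.univ.filter fun i => ⟪x - y, v i⟫ = 0 with hA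
  set B : Finset (Fin 5) := Finset.univ.filter fun i => ⟪x + y, v i⟫ = 0 with hB
  have hAB : A ∪ B = Finset.univ := by
    ext i
    simp only [hA, hB, Finset.mem_union, Finset.mem_filter, Finset.mem_univ, true_and, iff_true,
      inner_sub_left, inner_add_left]
    exact (abs_eq_abs.1 (h i)).imp (fun e => by linarith) (fun e => by linarith)
  have hcard : 5 ≤ A.card + B.card := by
    simpa [hAB] using Finset.card_union_le A B
  obtain hc | hc : 3 ≤ A.card ∨ 3 ≤ B.card := by omega
  · left
    exact sub_eq_zero.1 <| eq_zero_of_three_le_card_orthogonal v hfs (x - y) A hc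
      fun i hi => (Finset.mem_filter.1 hi).2
  · right
    exact eq_neg_of_add_eq_zero_left <| eq_zero_of_three_le_card_orthogonal v hfs (x + y) B hc
      fun i hi => (Finset.mem_filter.1 hi).2

/-- With `{e_1,e_2,e_3}` an orthonormal basis of `ℝ³` and `φ_1, φ_2` such that
the five vectors are full spark, unit norm signals are determined up to sign by the four
measurements `|⟨·, e_1⟩|, |⟨·, e_2⟩|, |⟨·, φ_1⟩|, |⟨·, φ_2⟩|`. -/
theorem four_vectors_phase_retrieval_unit_sphere
    (b : OrthonormalBasis (Fin 3) ℝ (EuclideanSpace ℝ (Fin 3)))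
    (φ : Fin 2 → EuclideanSpace ℝ (Fin 3))
    (hfs : ∀ S : Finset (Fin 5), S.card = 3 →
      LinearIndependent ℝ (fun i : S => (![b 0, b 1, b 2, φ 0, φ 1] : Fin 5 → EuclideanSpace ℝ (Fin 3)) i))
    (x y : EuclideanSpace ℝ (Fin 3)) (hx : ‖x‖ = 1) (hy : ‖y‖ = 1)
    (he1 : |⟪x, b 0⟫| = |⟪y, b 0⟫|) (he2 : |⟪x, b 1⟫| = |⟪y, b 1⟫|)
    (hφ : ∀ j : Fin 2, |⟪x, φ j⟫| = |⟪y, φ j⟫|) :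
    x = y ∨ x = -y := by
  have he3 : |⟪x, b 2⟫| = |⟪y, b 2⟫| := by
    have px := b.sum_sq_inner_left x
    have py := b.sum_sq_inner_left y
    rw [Fin.sum_univ_three] at px py
    rw [← sq_eq_sq_iff_abs_eq_abs] at *
    rw [hx] at px
    rw [hy] at py
    linarith
  refine eq_or_eq_neg_of_abs_inner_eq _ hfs x y fun i => ?_
  fin_cases i
  · exact he1
  · exact he2
  · exact he3
  · exact hφ 0
  · exact hφ 1
end
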